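/- arXiv:1003.3502 — 3 statements merged into one kernel-verified Lean document; each statement's English description precedes it below -/
import Mathlib

section
/- Let G be a finite group, k a field whose characteristic does not divide the order of G, and let S, R, A be commutative k-algebras each equipped with an action of G by k-algebra automorphisms. Let f : S → R and σ : S → A be G-equivariant k-algebra homomorphisms, and let I ⊆ A be a G-invariant ideal with I² = 0, so that G acts on A/I and the quotient map π : A → A/I is G-equivariant. Let p : R → A/I be a G-equivariant k-algebra homomorphism with p ∘ f = π ∘ σ. If there exists a (not necessarily equivariant) k-algebra homomorphism h : R → A with π ∘ h = p and h ∘ f = σ, then there exists a G-equivariant k-algebra homomorphism h̃ : R → A with π ∘ h̃ = p and h̃ ∘ f = σ. -/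
/-!
Lifts of `p : R → B` along `π : A → B` are closed under affine combinations as soon as `ker π`
squares to zero: two lifts differ by an element of `ker π` at every point, so the obstruction to
multiplicativity is a weighted sum of products of two elements of `ker π`. Every conjugate
`g ∘ h ∘ g⁻¹` of a lift `h` is again a lift. Their average, in which each conjugate has weight
`1 / |G|`, is therefore a lift, and it is equivariant.
-/

section AffineCombination

variable {ι k : Type*} [CommSemiring k] {s : Finset ι} {w : ι → k}

theorem sum_smul_eq_of_sum_eq_one {M : Type*} [AddCommMonoid M] [Module k M]
    (hw : ∑ i ∈ s, w i = 1) {x : ι → M} {c : M} (hx : ∀ i ∈ s, x i = c) :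
    ∑ i ∈ s, w i • x i = c := by
  rw [Finset.sum_congr rfl fun i hi => congrArg (w i • ·) (hx i hi), ← Finset.sum_smul, hw,
    one_smul]

theorem sum_smul_mul_eq_of_sub_mul_sub_eq_zero {A : Type*} [Ring A] [Algebra k A]
    (hw : ∑ i ∈ s, w i = 1) {x y : ι → A} {a b : A}
    (hx : ∑ i ∈ s, w i • x i = a) (hy : ∑ i ∈ s, w i • y i = b)
    (hxy : ∀ i ∈ s, (x i - a) * (y i - b) = 0) :
    ∑ i ∈ s, w i • (x i * y i) = a * b := by
  have expand : ∀ i ∈ s, x i * y i = x i * b + a * y i - a * b := fun i hi => by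
    rw [← sub_eq_zero, ← hxy i hi]
    noncomm_ring
  calc ∑ i ∈ s, w i • (x i * y i)
      = ∑ i ∈ s, w i • (x i * b + a * y i - a * b) :=
        Finset.sum_congr rfl fun i hi => congrArg (w i • ·) (expand i hi)
    _ = (∑ i ∈ s, w i • x i) * b + a * ∑ i ∈ s, w i • y i - ∑ i ∈ s, w i • (a * b) := by
        simp only [smul_sub, smul_add, Finset.sum_sub_distrib, Finset.sum_add_distrib,
          Finset.sum_mul, Finset.mul_sum, smul_mul_assoc, mul_smul_comm]
    _ = a * b := by
        rw [hx, hy, sum_smul_eq_of_sum_eq_one hw fun _ _ => rfl, add_sub_cancel_right]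

variable {R A B : Type*} [Semiring R] [Ring A] [Ring B] [Algebra k R] [Algebra k A] [Algebra k B]
  {π : A →ₐ[k] B} {p : R →ₐ[k] B} {φ : ι → R →ₐ[k] A}

theorem map_sum_smul_lift (hw : ∑ i ∈ s, w i = 1) (hφ : ∀ i ∈ s, π.comp (φ i) = p) (r : R) :
    π (∑ i ∈ s, w i • φ i r) = p r := by
  simp only [map_sum, map_smul]
  exact sum_smul_eq_of_sum_eq_one hw fun i hi => DFunLike.congr_fun (hφ i hi) r

theorem sum_smul_lift_map_mul (hπ : RingHom.ker π * RingHom.ker π = ⊥) (hw : ∑ i ∈ s, w i = 1)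
    (hφ : ∀ i ∈ s, π.comp (φ i) = p) (r t : R) :
    ∑ i ∈ s, w i • φ i (r * t) = (∑ i ∈ s, w i • φ i r) * ∑ i ∈ s, w i • φ i t := by
  have sub_mem_ker : ∀ i ∈ s, ∀ u, φ i u - ∑ j ∈ s, w j • φ j u ∈ RingHom.ker π :=
    fun i hi u => (RingHom.sub_mem_ker_iff π).2 <|
      (DFunLike.congr_fun (hφ i hi) u).trans (map_sum_smul_lift hw hφ u).symm
  simp only [map_mul]
  refine sum_smul_mul_eq_of_sub_mul_sub_eq_zero hw rfl rfl fun i hi => ?_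
  rw [← Ideal.mem_bot, ← hπ]
  exact Ideal.mul_mem_mul (sub_mem_ker i hi r) (sub_mem_ker i hi t)

variable (hπ : RingHom.ker π * RingHom.ker π = ⊥) (hw : ∑ i ∈ s, w i = 1)
  (hφ : ∀ i ∈ s, π.comp (φ i) = p)

/-- The affine combination `∑ i ∈ s, w i • φ i` of lifts `φ i` of `p` along a homomorphism `π`
with square-zero kernel, as an algebra homomorphism. It serves to average lifts over a group. -/
def affineCombinationOfLifts : R →ₐ[k] A :=
  AlgHom.ofLinearMap (∑ i ∈ s, w i • (φ i).toLinearMap)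
    (by simpa using sum_smul_eq_of_sum_eq_one hw fun i _ => map_one (φ i))
    (by simpa using sum_smul_lift_map_mul hπ hw hφ)

theorem affineCombinationOfLifts_apply (r : R) :
    affineCombinationOfLifts hπ hw hφ r = ∑ i ∈ s, w i • φ i r := by
  simp [affineCombinationOfLifts]

theorem comp_affineCombinationOfLifts : π.comp (affineCombinationOfLifts hπ hw hφ) = p :=
  AlgHom.ext fun r => (congrArg π (affineCombinationOfLifts_apply hπ hw hφ r)).trans
    (map_sum_smul_lift hw hφ r)

theorem affineCombinationOfLifts_comp {S : Type*} [Semiring S] [Algebra k S] {f : S →ₐ[k] R}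
    {σ : S →ₐ[k] A} (hφf : ∀ i ∈ s, (φ i).comp f = σ) :
    (affineCombinationOfLifts hπ hw hφ).comp f = σ :=
  AlgHom.ext fun x => (affineCombinationOfLifts_apply hπ hw hφ (f x)).trans <|
    sum_smul_eq_of_sum_eq_one hw fun i hi => DFunLike.congr_fun (hφf i hi) x

end AffineCombination

section Conjugate

variable {k G R A : Type*} [CommSemiring k] [Group G] [Semiring R] [Semiring A] [Algebra k R]
  [Algebra k A] [MulSemiringAction G R] [MulSemiringAction G A] [SMulCommClass G k R]
  [SMulCommClass G k A]

/-- The conjugate `r ↦ g • h (g⁻¹ • r)` of an algebra homomorphism `h` by a group element `g`.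
The equivariant homomorphisms are those fixed by every conjugation. -/
def conjAlgHom (g : G) (h : R →ₐ[k] A) : R →ₐ[k] A :=
  AlgEquiv.arrowCongr (MulSemiringAction.toAlgEquiv k R g) (MulSemiringAction.toAlgEquiv k A g) h

theorem conjAlgHom_apply (g : G) (h : R →ₐ[k] A) (r : R) :
    conjAlgHom g h r = g • h (g⁻¹ • r) :=
  rfl

theorem comp_conjAlgHom {B : Type*} [Semiring B] [Algebra k B] [MulAction G B] {π : A →ₐ[k] B}
    {p : R →ₐ[k] B} {h : R →ₐ[k] A} (hπ : ∀ (g : G) (a : A), π (g • a) = g • π a)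
    (hp : ∀ (g : G) (r : R), p (g • r) = g • p r) (hh : π.comp h = p) (g : G) :
    π.comp (conjAlgHom g h) = p := by
  ext r
  calc π (conjAlgHom g h r) = g • π (h (g⁻¹ • r)) := by rw [conjAlgHom_apply, hπ]
    _ = g • p (g⁻¹ • r) := congrArg (g • ·) (DFunLike.congr_fun hh _)
    _ = p r := by rw [hp, smul_inv_smul]

theorem conjAlgHom_comp {S : Type*} [Semiring S] [Algebra k S] [SMul G S] {f : S →ₐ[k] R}
    {σ : S →ₐ[k] A} {h : R →ₐ[k] A} (hf : ∀ (g : G) (x : S), f (g • x) = g • f x)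
    (hσ : ∀ (g : G) (x : S), σ (g • x) = g • σ x) (hh : h.comp f = σ) (g : G) :
    (conjAlgHom g h).comp f = σ := by
  ext x
  calc conjAlgHom g h (f x) = g • h (f (g⁻¹ • x)) := by rw [conjAlgHom_apply, hf]
    _ = g • σ (g⁻¹ • x) := congrArg (g • ·) (DFunLike.congr_fun hh _)
    _ = σ x := by rw [hσ, smul_inv_smul]

theorem sum_conjAlgHom_apply_smul [Fintype G] (h : R →ₐ[k] A) (g : G) (r : R) :
    ∑ g' : G, conjAlgHom g' h (g • r) = g • ∑ g' : G, conjAlgHom g' h r := by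
  rw [Finset.smul_sum]
  refine Fintype.sum_equiv (Equiv.mulLeft g⁻¹) _ _ fun g' => ?_
  simp [conjAlgHom_apply, smul_smul]

end Conjugate

theorem stmt0_general {k : Type*} [CommSemiring k] (G : Type*) [Group G] [Fintype G]
    (hcard : IsUnit (Fintype.card G : k))
    {S R A B : Type*} [Semiring S] [Semiring R] [Ring A] [Ring B]
    [Algebra k S] [Algebra k R] [Algebra k A] [Algebra k B]
    [SMul G S] [MulSemiringAction G R] [MulSemiringAction G A] [MulAction G B]
    [SMulCommClass G k R] [SMulCommClass G k A]
    (f : S →ₐ[k] R) (hf : ∀ (g : G) (s : S), f (g • s) = g • f s)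
    (σ : S →ₐ[k] A) (hσ : ∀ (g : G) (s : S), σ (g • s) = g • σ s)
    (π : A →ₐ[k] B) (hπsq : RingHom.ker π * RingHom.ker π = ⊥)
    (hπ : ∀ (g : G) (a : A), π (g • a) = g • π a)
    (p : R →ₐ[k] B) (hp : ∀ (g : G) (r : R), p (g • r) = g • p r)
    (h : R →ₐ[k] A) (hh1 : π.comp h = p) (hh2 : h.comp f = σ) :
    ∃ ht : R →ₐ[k] A, (∀ (g : G) (r : R), ht (g • r) = g • ht r) ∧
      π.comp ht = p ∧ ht.comp f = σ := by
  obtain ⟨c, hc⟩ := hcard.exists_right_inv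
  have hw : ∑ _g : G, c = 1 := by
    rw [Finset.sum_const, Finset.card_univ, nsmul_eq_mul, hc]
  have hconj : ∀ g ∈ (Finset.univ : Finset G), π.comp (conjAlgHom g h) = p :=
    fun g _ => comp_conjAlgHom hπ hp hh1 g
  refine ⟨affineCombinationOfLifts hπsq hw hconj, fun g r => ?_,
    comp_affineCombinationOfLifts hπsq hw hconj,
    affineCombinationOfLifts_comp hπsq hw hconj fun g _ => conjAlgHom_comp hf hσ hh2 g⟩
  simp only [affineCombinationOfLifts_apply, ← Finset.smul_sum]
  rw [sum_conjAlgHom_apply_smul, smul_comm g]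

/-- Equivariant infinitesimal lifting lemma (Lemma 2.1): if a lifting of `p`
exists, a `G`-equivariant lifting exists, provided `char k` does not divide `|G|`. -/
theorem stmt0 {k : Type*} [Field k] (G : Type*) [Group G] [Fintype G]
    (hchar : ¬ (ringChar k ∣ Fintype.card G))
    {S R A B : Type*} [CommRing S] [CommRing R] [CommRing A] [CommRing B]
    [Algebra k S] [Algebra k R] [Algebra k A] [Algebra k B]
    [MulSemiringAction G S] [MulSemiringAction G R] [MulSemiringAction G A]
    [MulSemiringAction G B]
    [SMulCommClass G k S] [SMulCommClass G k R] [SMulCommClass G k A]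
    [SMulCommClass G k B]
    (f : S →ₐ[k] R) (hf : ∀ (g : G) (s : S), f (g • s) = g • f s)
    (σ : S →ₐ[k] A) (hσ : ∀ (g : G) (s : S), σ (g • s) = g • σ s)
    (I : Ideal A) (hI2 : I ^ 2 = ⊥) (hIG : ∀ (g : G), ∀ x ∈ I, g • x ∈ I)
    -- `π : A → B` plays the role of the quotient map `A → A/I`
    (π : A →ₐ[k] B) (hπsurj : Function.Surjective π)
    (hπker : RingHom.ker (π : A →+* B) = I)
    (hπ : ∀ (g : G) (a : A), π (g • a) = g • π a)
    (p : R →ₐ[k] B) (hp : ∀ (g : G) (r : R), p (g • r) = g • p r)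
    (hpf : p.comp f = π.comp σ)
    (h : R →ₐ[k] A) (hh1 : π.comp h = p) (hh2 : h.comp f = σ) :
    ∃ ht : R →ₐ[k] A, (∀ (g : G) (r : R), ht (g • r) = g • ht r) ∧
      π.comp ht = p ∧ ht.comp f = σ := by
  have hcard : (Fintype.card G : k) ≠ 0 := fun h0 => hchar ((ringChar.spec k _).1 h0)
  exact stmt0_general G hcard.isUnit f hf σ hσ π (by rwa [← hπker, pow_two] at hI2) hπ
    p hp h hh1 hh2
end

section
/- There exist λ, a, b, c ∈ ℂ with a ≠ 0 such that, setting f₀ = S⁵ + λ S T⁴, f₁ = a T⁵, f₂ = b S² T³, f₃ = c S³ T² in the polynomial ring ℂ[S, T], one has the identity f₀² f₁ + f₁² f₂ + f₂³ + f₃² f₁ + f₀ f₂ f₃ = 0 in ℂ[S, T]. -/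
open MvPolynomial

/-!
On the curve the cubic form is a combination of the three monomials `S¹⁰T⁵`, `S⁶T⁹`, `S²T¹³`, so
the curve lies on the surface once three polynomial equations in `λ, a, b, c` hold. The outer two
are solved by `a = -bc` and `λ² = b²c`; normalising `c = 1` and choosing `λ = b`, the middle one
becomes `b (b² - b - 1) = 0`, which the golden ratio solves.
-/

section CommRing

variable {R : Type*} [CommRing R]

/-- The cubic form whose zero locus in `ℙ³` is the surface of Example 4.5, as a function of the
homogeneous coordinates, which may be elements of any commutative ring (here, polynomials
parametrizing a curve). -/
def cubicForm (x₀ x₁ x₂ x₃ : R) : R :=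
  x₀ ^ 2 * x₁ + x₁ ^ 2 * x₂ + x₂ ^ 3 + x₃ ^ 2 * x₁ + x₀ * x₂ * x₃

theorem cubicForm_curve_expansion (S T lam a b c : R) :
    cubicForm (S ^ 5 + lam * S * T ^ 4) (a * T ^ 5) (b * S ^ 2 * T ^ 3) (c * S ^ 3 * T ^ 2) =
      (a + b * c) * (S ^ 10 * T ^ 5) +
        (2 * a * lam + b ^ 3 + a * c ^ 2 + lam * b * c) * (S ^ 6 * T ^ 9) +
        a * (lam ^ 2 + a * b) * (S ^ 2 * T ^ 13) := by
  unfold cubicForm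
  ring

theorem cubicForm_curve_eq_zero_of_sq_eq_add_one {φ : R} (hφ : φ ^ 2 = φ + 1) (S T : R) :
    cubicForm (S ^ 5 + φ * S * T ^ 4) (-φ * T ^ 5) (φ * S ^ 2 * T ^ 3) (1 * S ^ 3 * T ^ 2) = 0 := by
  have coeff_S10T5 : -φ + φ * 1 = 0 := by ring
  have coeff_S6T9 : 2 * -φ * φ + φ ^ 3 + -φ * 1 ^ 2 + φ * φ * 1 = 0 := by
    linear_combination φ * hφ
  have coeff_S2T13 : -φ * (φ ^ 2 + -φ * φ) = 0 := by ring
  rw [cubicForm_curve_expansion, coeff_S10T5, coeff_S6T9, coeff_S2T13]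
  simp only [zero_mul, add_zero]

theorem isUnit_of_sq_eq_add_one {φ : R} (hφ : φ ^ 2 = φ + 1) : IsUnit φ :=
  .of_mul_eq_one (φ - 1) (by linear_combination hφ)

theorem stmt9_general {φ : R} (hφ : φ ^ 2 = φ + 1) :
    ∃ lam a b c : R, IsUnit a ∧
      cubicForm (X 0 ^ 5 + C lam * X 0 * X 1 ^ 4) (C a * X 1 ^ 5) (C b * X 0 ^ 2 * X 1 ^ 3)
        (C c * X 0 ^ 3 * X 1 ^ 2) = (0 : MvPolynomial (Fin 2) R) := by
  have hCφ : (C φ : MvPolynomial (Fin 2) R) ^ 2 = C φ + 1 := by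
    rw [← C_pow, hφ, C_add, C_1]
  refine ⟨φ, -φ, φ, 1, (isUnit_of_sq_eq_add_one hφ).neg, ?_⟩
  rw [C_neg, C_1]
  exact cubicForm_curve_eq_zero_of_sq_eq_add_one hCφ (X 0) (X 1)

end CommRing

/-- Example 4.5: there exist `λ, a, b, c ∈ ℂ` with `a ≠ 0` such that the curve
`[S,T] ↦ [S⁵ + λST⁴, aT⁵, bS²T³, cS³T²]` lies on the cubic surface
`X₀²X₁ + X₁²X₂ + X₂³ + X₃²X₁ + X₀X₂X₃ = 0`. -/
theorem stmt9 :
    ∃ lam a b c : ℂ, a ≠ 0 ∧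
      (let S : MvPolynomial (Fin 2) ℂ := X 0
       let T : MvPolynomial (Fin 2) ℂ := X 1
       let f₀ := S ^ 5 + C lam * S * T ^ 4
       let f₁ := C a * T ^ 5
       let f₂ := C b * S ^ 2 * T ^ 3
       let f₃ := C c * S ^ 3 * T ^ 2
       f₀ ^ 2 * f₁ + f₁ ^ 2 * f₂ + f₂ ^ 3 + f₃ ^ 2 * f₁ + f₀ * f₂ * f₃ = 0) := by
  have golden_sq : (Real.goldenRatio : ℂ) ^ 2 = Real.goldenRatio + 1 := by
    exact_mod_cast Real.goldenRatio_sq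
  obtain ⟨lam, a, b, c, ha, hcurve⟩ := stmt9_general golden_sq
  exact ⟨lam, a, b, c, ha.ne_zero, hcurve⟩
end

section
/- Let F = X₀² X₁ + X₁² X₂ + X₂³ + X₃² X₁ + X₀ X₂ X₃, a cubic form in four variables over ℂ. If a point (x₀, x₁, x₂, x₃) ∈ ℂ⁴ is a common zero of all four partial derivatives ∂F/∂X₀ = 2X₀X₁ + X₂X₃, ∂F/∂X₁ = X₀² + 2X₁X₂ + X₃², ∂F/∂X₂ = X₁² + 3X₂² + X₀X₃, and ∂F/∂X₃ = 2X₃X₁ + X₀X₂, then (x₀, x₁, x₂, x₃) = (0, 0, 0, 0). Consequently the projective cubic surface {F = 0} ⊂ ℙ³ is smooth. -/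
/-!
In the coordinates `u = X₀ + X₃`, `v = X₀ - X₃` the cubic becomes
`4F = (2X₁ + X₂)u² + (2X₁ - X₂)v² + 4X₂(X₁² + X₂²)`, diagonal in `u` and `v`. At a critical point
the derivatives along `u` and `v` give `(2X₁ + X₂)u = 0 = (2X₁ - X₂)v`, while the other two
derivatives express `u²` and `v²` as quadratic forms in `X₁` and `X₂`. Multiplying these forms by
`2X₁ ± X₂` leaves two binary cubics in `X₁` and `X₂`. Their resultant has no prime factor other
than `2`, `3` and `5`, so `X₁ = X₂ = 0`, hence `u = v = 0`.
-/

open scoped nonZeroDivisors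

theorem mem_nonZeroDivisors_of_dvd {M : Type*} [CommMonoidWithZero M] {a b : M} (hab : a ∣ b)
    (hb : b ∈ M⁰) : a ∈ M⁰ := by
  obtain ⟨c, rfl⟩ := hab
  exact (mul_mem_nonZeroDivisors.1 hb).1

section CommRing

variable {R : Type*} [CommRing R] [IsReduced R]

-- Up to sign, the resultant of the two cubics is `q * r * (p * s - q * r) ^ 2`.
theorem eq_zero_and_eq_zero_of_binary_cubics {p q r s y z : R} (hq : q ∈ R⁰) (hr : r ∈ R⁰)
    (hdet : p * s - q * r ∈ R⁰) (hz : z * (p * y ^ 2 + q * z ^ 2) = 0)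
    (hy : y * (r * y ^ 2 + s * z ^ 2) = 0) : y = 0 ∧ z = 0 := by
  have yz_cube : y * z ^ 3 = 0 := by
    rw [← mul_left_mem_nonZeroDivisors_eq_zero_iff hdet]
    linear_combination p * z * hy - r * y * hz
  have yz : y * z = 0 :=
    eq_zero_of_pow_eq_zero (n := 3) (by linear_combination y ^ 2 * yz_cube)
  have z_cube : z ^ 3 = 0 := by
    rw [← mul_left_mem_nonZeroDivisors_eq_zero_iff hq]
    linear_combination hz - p * y * yz
  have y_cube : y ^ 3 = 0 := by
    rw [← mul_left_mem_nonZeroDivisors_eq_zero_iff hr]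
    linear_combination hy - s * z * yz
  exact ⟨eq_zero_of_pow_eq_zero y_cube, eq_zero_of_pow_eq_zero z_cube⟩

theorem eq_zero_and_eq_zero_of_add_sq_of_sub_sq (htwo : (2 : R) ∈ R⁰) {x y : R}
    (hadd : (x + y) ^ 2 = 0) (hsub : (x - y) ^ 2 = 0) : x = 0 ∧ y = 0 := by
  have x_add_y : x + y = 0 := eq_zero_of_pow_eq_zero hadd
  have x_sub_y : x - y = 0 := eq_zero_of_pow_eq_zero hsub
  constructor <;> rw [← mul_left_mem_nonZeroDivisors_eq_zero_iff htwo]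
  · linear_combination x_add_y + x_sub_y
  · linear_combination x_add_y - x_sub_y

theorem stmt10_general (h30 : (30 : R) ∈ R⁰) {x₀ x₁ x₂ x₃ : R}
    (h0 : 2 * x₀ * x₁ + x₂ * x₃ = 0)
    (h1 : x₀ ^ 2 + 2 * x₁ * x₂ + x₃ ^ 2 = 0)
    (h2 : x₁ ^ 2 + 3 * x₂ ^ 2 + x₀ * x₃ = 0)
    (h3 : 2 * x₃ * x₁ + x₀ * x₂ = 0) :
    (x₀, x₁, x₂, x₃) = ((0 : R), (0 : R), (0 : R), (0 : R)) := by
  -- The exponent accommodates the determinant `12 * 28 - 12 * 8 = 2 ^ 4 * 3 * 5` below.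
  have regular_of_dvd {n : R} (hn : n ∣ 30 ^ 4) : n ∈ R⁰ :=
    mem_nonZeroDivisors_of_dvd hn (pow_mem h30 4)
  have two_regular : (2 : R) ∈ R⁰ := regular_of_dvd ⟨405000, by norm_num⟩
  have deriv_u : (2 * x₁ + x₂) * (x₀ + x₃) = 0 := by linear_combination h0 + h3
  have deriv_v : (2 * x₁ - x₂) * (x₀ - x₃) = 0 := by linear_combination h0 - h3
  have u_sq : (x₀ + x₃) ^ 2 = -2 * (x₁ ^ 2 + x₁ * x₂ + 3 * x₂ ^ 2) := by
    linear_combination h1 + 2 * h2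
  have v_sq : (x₀ - x₃) ^ 2 = 2 * (x₁ ^ 2 - x₁ * x₂ + 3 * x₂ ^ 2) := by
    linear_combination h1 - 2 * h2
  have cubic_add : (2 * x₁ + x₂) * (2 * (x₁ ^ 2 + x₁ * x₂ + 3 * x₂ ^ 2)) = 0 := by
    linear_combination (2 * x₁ + x₂) * u_sq - (x₀ + x₃) * deriv_u
  have cubic_sub : (2 * x₁ - x₂) * (2 * (x₁ ^ 2 - x₁ * x₂ + 3 * x₂ ^ 2)) = 0 := by
    linear_combination (x₀ - x₃) * deriv_v - (2 * x₁ - x₂) * v_sq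
  obtain ⟨rfl, rfl⟩ : x₁ = 0 ∧ x₂ = 0 :=
    eq_zero_and_eq_zero_of_binary_cubics (p := 12) (q := 12) (r := 8) (s := 28)
      (regular_of_dvd ⟨67500, by norm_num⟩) (regular_of_dvd ⟨101250, by norm_num⟩)
      (regular_of_dvd ⟨3375, by norm_num⟩)
      (by linear_combination cubic_add - cubic_sub) (by linear_combination cubic_add + cubic_sub)
  obtain ⟨rfl, rfl⟩ : x₀ = 0 ∧ x₃ = 0 :=
    eq_zero_and_eq_zero_of_add_sq_of_sub_sq two_regular
      (by linear_combination u_sq) (by linear_combination v_sq)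
  rfl

end CommRing

/-- Smoothness of the cubic surface of Example 4.5, via the Jacobian criterion:
the four partial derivatives of `F = X₀²X₁ + X₁²X₂ + X₂³ + X₃²X₁ + X₀X₂X₃` have no
common zero other than the origin. -/
theorem stmt10 (x₀ x₁ x₂ x₃ : ℂ)
    (h0 : 2 * x₀ * x₁ + x₂ * x₃ = 0)
    (h1 : x₀ ^ 2 + 2 * x₁ * x₂ + x₃ ^ 2 = 0)
    (h2 : x₁ ^ 2 + 3 * x₂ ^ 2 + x₀ * x₃ = 0)
    (h3 : 2 * x₃ * x₁ + x₀ * x₂ = 0) :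
    (x₀, x₁, x₂, x₃) = ((0 : ℂ), (0 : ℂ), (0 : ℂ), (0 : ℂ)) :=
  stmt10_general (mem_nonZeroDivisors_of_ne_zero (by norm_num)) h0 h1 h2 h3
end
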